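/- Let λ : ℤ₊ → ℝ satisfy (UB) and let N ≥ 1. For all t ≥ 0 and all (y,x), (y',x') ∈ W^{N,N+1}: U_t^{N,N+1}[(y,x),(y',x')] ≥ 0. -/

import Mathlib

open Complex MeasureTheory Finset
open scoped Real ComplexOrder

/-- ψ_x(w) = ∏_{k=0}^{x} λ(k)/(λ(k)−w). -/
noncomputable def psiF (lam : ℕ → ℝ) (x : ℕ) (w : ℂ) : ℂ :=
  ∏ k ∈ Finset.range (x + 1), (lam k : ℂ) / ((lam k : ℂ) - w)

/-- p_x(w) = ∏_{k=0}^{x−1} (λ(k)−w)/λ(k). -/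
noncomputable def pF (lam : ℕ → ℝ) (x : ℕ) (w : ℂ) : ℂ :=
  ∏ k ∈ Finset.range x, (((lam k : ℂ) - w) / (lam k : ℂ))

/-- e^{tL}(x,y) := −(1/λ(y))·(1/(2πi)) ∮_{|w|=R} ψ_y(w) p_x(w) e^{−tw} dw,
the contour being the counterclockwise circle of radius R centred at 0. -/
noncomputable def eL (lam : ℕ → ℝ) (R t : ℝ) (x y : ℕ) : ℂ :=
  -(1 / (lam y : ℂ)) * ((2 * (Real.pi : ℂ) * Complex.I)⁻¹ *
    ∮ w in C(0, R), psiF lam y w * pF lam x w * Complex.exp (-(t : ℂ) * w))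

/-- y ≺ x : interlacing, x_1 ≤ y_1 < x_2 ≤ y_2 < ⋯ ≤ y_N < x_{N+1}.
(Membership of (y,x) in W^{N,N+1} is exactly this condition.) -/
def Interlace {N : ℕ} (y : Fin N → ℕ) (x : Fin (N + 1) → ℕ) : Prop :=
  ∀ i : Fin N, x i.castSucc ≤ y i ∧ y i < x i.succ

instance {N : ℕ} (y : Fin N → ℕ) (x : Fin (N + 1) → ℕ) : Decidable (Interlace y x) :=
  inferInstanceAs (Decidable (∀ i : Fin N, x i.castSucc ≤ y i ∧ y i < x i.succ))

/-- The two-level Karlin–McGregor block determinant kernel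
U_t^{N,N+1}[(y,x),(y',x')] = det [[A, B],[C, D]] with
A_{ij} = e^{tL}(x_i,x'_j), B_{ij} = λ(y'_j)⁻¹ (Σ_{z=0}^{y'_j} e^{tL}(x_i,z) − 1(j ≥ i)),
C_{ij} = λ(y_i)(e^{tL}(y_i,x'_j) − e^{tL}(y_i+1,x'_j)), D_{ij} = e^{tL}(y_i,y'_j). -/
noncomputable def Ut (lam : ℕ → ℝ) (R t : ℝ) (N : ℕ)
    (y : Fin N → ℕ) (x : Fin (N + 1) → ℕ)
    (y' : Fin N → ℕ) (x' : Fin (N + 1) → ℕ) : ℂ :=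
  (Matrix.fromBlocks
    (Matrix.of fun i j => eL lam R t (x i) (x' j))
    (Matrix.of fun (i : Fin (N + 1)) (j : Fin N) =>
      (1 / (lam (y' j) : ℂ)) *
        ((∑ z ∈ Finset.range (y' j + 1), eL lam R t (x i) z)
          - if (i : ℕ) ≤ (j : ℕ) then 1 else 0))
    (Matrix.of fun (i : Fin N) (j : Fin (N + 1)) =>
      (lam (y i) : ℂ) * (eL lam R t (y i) (x' j) - eL lam R t (y i + 1) (x' j)))
    (Matrix.of fun i j => eL lam R t (y i) (y' j))).det

/-!
`Ut` behaves like the transition kernel of an interacting system in which every particle at `a`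
jumps to `a + 1` at rate `λ(a)`, an upper particle `x_i` being blocked while it sits on `y_i`, and
a lower particle `y_i` pushing `x_{i+1}` when it jumps onto it. Each row of the block matrix solves
the backward equation of a single particle, so the determinant solves that of independent particles.
The interaction is a linear dependency between rows: the determinant does not change when `x_i` is
raised by one while it equals some `y_j`. For blocking this cancels a term of the generator; for
pushing it replaces the non-interlacing configuration after the jump by the one with `x_{i+1}`
pushed.

Thus `∂ₜ U = ∑ λ · (U(successor) - U)` over successors that interlace or at which `U = 0`, and
Duhamel's formula transfers nonnegativity from the successors to `U`. Since `U` vanishes as soon as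
`x_{N+1} > x'_{N+1}`, only finitely many steps are needed. At time `0` the matrix, read along
`x₁ ≤ y₁ < x₂ ≤ ⋯`, has for every index either a row or a column vanishing before the diagonal, so
the determinant is the product of its diagonal entries, which is the identity kernel.
-/

/-- The contour transform `t ↦ -(2πi)⁻¹ ∮_{|w| = R} f(w) e^{-tw} dw`; up to the factor `1 / λ(y)`,
the kernel `eL` is the transform of `ψ_y p_x`. -/
noncomputable def contourTransform (R : ℝ) (f : ℂ → ℂ) (t : ℝ) : ℂ :=
  -(2 * (π : ℂ) * I)⁻¹ * ∮ w in C(0, R), f w * exp (-(t : ℂ) * w)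

section ContourTransform

variable {R : ℝ}

theorem contourTransform_congr (hR : 0 ≤ R) {f g : ℂ → ℂ} (h : Set.EqOn f g (Metric.sphere 0 R))
    (t : ℝ) : contourTransform R f t = contourTransform R g t := by
  rw [contourTransform, contourTransform,
    circleIntegral.integral_congr hR fun w hw => by rw [h hw]]

theorem contourTransform_const_mul (c : ℂ) (f : ℂ → ℂ) (t : ℝ) :
    contourTransform R (fun w => c * f w) t = c * contourTransform R f t := by
  simp_rw [contourTransform, mul_assoc c]
  rw [circleIntegral.integral_const_mul, mul_left_comm]

theorem circleIntegrable_mul_exp (hR : 0 ≤ R) {f : ℂ → ℂ}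
    (hf : ContinuousOn f (Metric.sphere 0 R)) (t : ℝ) :
    CircleIntegrable (fun w => f w * exp (-(t : ℂ) * w)) 0 R :=
  (hf.mul (by fun_prop)).circleIntegrable hR

theorem contourTransform_sub (hR : 0 ≤ R) {f g : ℂ → ℂ}
    (hf : ContinuousOn f (Metric.sphere 0 R)) (hg : ContinuousOn g (Metric.sphere 0 R)) (t : ℝ) :
    contourTransform R (fun w => f w - g w) t =
      contourTransform R f t - contourTransform R g t := by
  simp only [contourTransform, sub_mul]
  rw [circleIntegral.integral_sub (circleIntegrable_mul_exp hR hf t)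
    (circleIntegrable_mul_exp hR hg t), mul_sub]

theorem contourTransform_sum (hR : 0 ≤ R) {ι : Type*} (s : Finset ι) {f : ι → ℂ → ℂ}
    (hf : ∀ i ∈ s, ContinuousOn (f i) (Metric.sphere 0 R)) (t : ℝ) :
    contourTransform R (fun w => ∑ i ∈ s, f i w) t = ∑ i ∈ s, contourTransform R (f i) t := by
  simp only [contourTransform, Finset.sum_mul]
  rw [circleIntegral.integral_fun_sum fun i hi => circleIntegrable_mul_exp hR (hf i hi) t,
    Finset.mul_sum]

theorem contourTransform_eq_zero_of_differentiable (hR : 0 ≤ R) {f : ℂ → ℂ}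
    (hf : Differentiable ℂ f) (t : ℝ) : contourTransform R f t = 0 := by
  have hd : Differentiable ℂ fun w => f w * exp (-(t : ℂ) * w) := by fun_prop
  rw [contourTransform, circleIntegral_eq_zero_of_differentiable_on_off_countable hR
    Set.countable_empty hd.continuous.continuousOn fun w _ => hd w, mul_zero]

theorem hasDerivAt_intervalIntegral_of_continuous {E : Type*} [NormedAddCommGroup E]
    [NormedSpace ℝ E] {F F' : ℝ → ℝ → E} (hF : ∀ t, Continuous (F t))
    (hF' : Continuous (Function.uncurry F'))
    (hd : ∀ t θ, HasDerivAt (fun t => F t θ) (F' t θ) t) (a b t : ℝ) :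
    HasDerivAt (fun t => ∫ θ in a..b, F t θ) (∫ θ in a..b, F' t θ) t := by
  obtain ⟨C, hC⟩ := ((isCompact_closedBall t 1).prod
    (isCompact_uIcc (a := a) (b := b))).exists_bound_of_continuousOn hF'.continuousOn
  exact (intervalIntegral.hasDerivAt_integral_of_dominated_loc_of_deriv_le (bound := fun _ => C)
    (Metric.closedBall_mem_nhds t one_pos)
    (.of_forall fun u => (hF u).aestronglyMeasurable) ((hF t).intervalIntegrable a b)
    (hF'.comp (.prodMk_right t)).aestronglyMeasurable
    (.of_forall fun θ hθ u hu => hC (u, θ) ⟨hu, Set.uIoc_subset_uIcc hθ⟩)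
    intervalIntegrable_const (.of_forall fun θ _ u _ => hd u θ)).2

theorem hasDerivAt_contourTransform (hR : 0 ≤ R) {f : ℂ → ℂ}
    (hf : ContinuousOn f (Metric.sphere 0 R)) (t : ℝ) :
    HasDerivAt (contourTransform R f) (contourTransform R (fun w => -w * f w) t) t := by
  have hfc : Continuous fun θ : ℝ => f (circleMap 0 R θ) :=
    hf.comp_continuous (continuous_circleMap 0 R) fun θ => circleMap_mem_sphere 0 hR θ
  let F (g : ℂ → ℂ) (u θ : ℝ) : ℂ := deriv (circleMap 0 R) θ •
    (g (circleMap 0 R θ) * exp (-(u : ℂ) * circleMap 0 R θ))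
  have hF (u θ : ℝ) : HasDerivAt (fun u => F f u θ) (F (fun w => -w * f w) u θ) u := by
    have hexp := ((ofRealCLM.hasDerivAt (x := u)).neg.mul_const (circleMap 0 R θ)).cexp
    refine ((hexp.const_mul (f (circleMap 0 R θ))).const_smul
      (deriv (circleMap 0 R) θ)).congr_deriv ?_
    simp only [F, Pi.neg_apply, ofRealCLM_apply, smul_eq_mul, ofReal_one]
    ring
  have hdc : Continuous (deriv (circleMap 0 R)) := by
    simp only [funext (deriv_circleMap 0 R)]
    fun_prop
  have hFc (u : ℝ) : Continuous (F f u) := hdc.smul (hfc.mul (by fun_prop))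
  have hFc' : Continuous (Function.uncurry (F fun w => -w * f w)) :=
    (hdc.comp continuous_snd).smul
      (.mul (.mul (by fun_prop) (hfc.comp continuous_snd)) (by fun_prop))
  exact (hasDerivAt_intervalIntegral_of_continuous hFc hFc' hF 0 (2 * π) t).const_mul _

theorem circleIntegral_eq_zero_of_tendsto_mul_cobounded {f : ℂ → ℂ} (hR : 0 < R)
    (hf : ∀ w : ℂ, R ≤ ‖w‖ → DifferentiableAt ℂ f w)
    (hlim : Filter.Tendsto (fun w => w * f w) (Bornology.cobounded ℂ) (nhds 0)) :
    (∮ w in C(0, R), f w) = 0 := by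
  refine norm_le_zero_iff.1 (le_of_forall_pos_le_add fun ε hε => ?_)
  have hsmall : ∀ᶠ w in Bornology.cobounded ℂ, ‖w * f w‖ < ε / (2 * π) := by
    refine hlim.norm.eventually_lt_const ?_
    rw [norm_zero]
    positivity
  obtain ⟨r, -, hr⟩ := Filter.hasBasis_cobounded_norm.eventually_iff.1 hsmall
  set ρ := max r R
  have hρ0 : 0 < ρ := hR.trans_le (le_max_right r R)
  have hdeform : (∮ w in C(0, ρ), f w) = ∮ w in C(0, R), f w :=
    circleIntegral_eq_of_differentiable_on_annulus_off_countable hR (le_max_right r R)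
      Set.countable_empty
      (fun w hw => (hf w (by simpa using hw.2)).continuousAt.continuousWithinAt)
      fun w hw => hf w (le_of_lt (by simpa using hw.1.2))
  have hbound : ∀ w ∈ Metric.sphere (0 : ℂ) ρ, ‖f w‖ ≤ ε / (2 * π) / ρ := fun w hw => by
    rw [mem_sphere_zero_iff_norm] at hw
    have := hr (show r ≤ ‖w‖ from hw ▸ le_max_left r R)
    rw [norm_mul, hw] at this
    rw [le_div_iff₀' hρ0]
    exact this.le
  calc ‖∮ w in C(0, R), f w‖ ≤ 2 * π * ρ * (ε / (2 * π) / ρ) :=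
        hdeform ▸ circleIntegral.norm_integral_le_of_norm_le_const hρ0.le hbound
    _ = 0 + ε := by field_simp; ring

end ContourTransform

section Kernel

variable {lam : ℕ → ℝ} {R : ℝ}

theorem sub_ne_zero_of_norm_lt {E : Type*} [NormedAddGroup E] {a b : E} (h : ‖a‖ < ‖b‖) :
    a - b ≠ 0 :=
  sub_ne_zero.2 fun hab => h.ne (congrArg norm hab)

theorem pos_radius {y : ℕ} (hR : ∀ k ≤ y, |lam k| < R) : 0 < R :=
  (abs_nonneg _).trans_lt (hR 0 y.zero_le)

theorem ofReal_sub_ne_zero_of_mem_sphere {y : ℕ} (hR : ∀ k ≤ y, |lam k| < R) {w : ℂ}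
    (hw : w ∈ Metric.sphere (0 : ℂ) R) : ∀ k ≤ y, (lam k : ℂ) - w ≠ 0 := fun k hk =>
  sub_ne_zero_of_norm_lt <| by
    rw [norm_real, mem_sphere_zero_iff_norm.1 hw]
    exact hR k hk

theorem continuousOn_psiF {y : ℕ} (hR : ∀ k ≤ y, |lam k| < R) :
    ContinuousOn (psiF lam y) (Metric.sphere 0 R) :=
  continuousOn_finsetProd _ fun k hk => continuousOn_const.div (by fun_prop) fun _ hw =>
    ofReal_sub_ne_zero_of_mem_sphere hR hw k (Finset.mem_range_succ_iff.1 hk)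

theorem differentiable_pF (lam : ℕ → ℝ) (x : ℕ) : Differentiable ℂ (pF lam x) := by
  unfold pF
  fun_prop

theorem continuousOn_psiF_mul_pF {y : ℕ} (hR : ∀ k ≤ y, |lam k| < R) (x : ℕ) :
    ContinuousOn (fun w => psiF lam y w * pF lam x w) (Metric.sphere 0 R) :=
  (continuousOn_psiF hR).mul (differentiable_pF lam x).continuous.continuousOn

theorem mul_pF_succ_sub_pF {x : ℕ} (hx : lam x ≠ 0) (w : ℂ) :
    (lam x : ℂ) * (pF lam (x + 1) w - pF lam x w) = -w * pF lam x w := by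
  have := ofReal_ne_zero.2 hx
  simp only [pF, Finset.prod_range_succ]
  field_simp
  ring

theorem neg_mul_sum_psiF (hlam : ∀ k, lam k ≠ 0) {w : ℂ} {y : ℕ}
    (hw : ∀ k ≤ y, (lam k : ℂ) - w ≠ 0) :
    -w * ∑ z ∈ range (y + 1), (lam z : ℂ)⁻¹ * psiF lam z w = 1 - psiF lam y w := by
  unfold psiF
  induction y with
  | zero =>
    have h := ofReal_ne_zero.2 (hlam 0)
    have h' := hw 0 le_rfl
    simp only [zero_add, Finset.sum_range_one, Finset.prod_range_one]
    field_simp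
    ring
  | succ y ih =>
    have h := ofReal_ne_zero.2 (hlam (y + 1))
    have h' := hw (y + 1) le_rfl
    rw [Finset.sum_range_succ, mul_add, ih fun k hk => hw k (hk.trans y.le_succ),
      Finset.prod_range_succ _ (y + 1)]
    field_simp
    ring

theorem psiF_mul_pF_of_lt (hlam : ∀ k, lam k ≠ 0) {w : ℂ} {x y : ℕ} (hyx : y < x)
    (hw : ∀ k ≤ y, (lam k : ℂ) - w ≠ 0) :
    psiF lam y w * pF lam x w = ∏ k ∈ Ico (y + 1) x, ((lam k : ℂ) - w) / (lam k : ℂ) := by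
  rw [psiF, pF, ← Finset.prod_range_mul_prod_Ico _ (Nat.succ_le_of_lt hyx), ← mul_assoc,
    ← Finset.prod_mul_distrib, Finset.prod_eq_one, one_mul]
  exact fun k hk => (div_mul_div_cancel₀ (hw k (Finset.mem_range_succ_iff.1 hk))).trans
    (div_self (ofReal_ne_zero.2 (hlam k)))

theorem psiF_mul_pF_of_le (hlam : ∀ k, lam k ≠ 0) {w : ℂ} {x y : ℕ} (hxy : x ≤ y)
    (hw : ∀ k ≤ y, (lam k : ℂ) - w ≠ 0) :
    psiF lam y w * pF lam x w = ∏ k ∈ Ico x (y + 1), (lam k : ℂ) / ((lam k : ℂ) - w) := by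
  rw [psiF, pF, ← Finset.prod_range_mul_prod_Ico _ (Nat.le_succ_of_le hxy), mul_right_comm,
    ← Finset.prod_mul_distrib, Finset.prod_eq_one, one_mul]
  exact fun k hk => (div_mul_div_cancel₀ (hw k ((Finset.mem_range.1 hk).le.trans hxy))).trans
    (div_self (ofReal_ne_zero.2 (hlam k)))

theorem eL_eq_contourTransform (lam : ℕ → ℝ) (R t : ℝ) (x y : ℕ) :
    eL lam R t x y =
      (lam y : ℂ)⁻¹ * contourTransform R (fun w => psiF lam y w * pF lam x w) t := by
  rw [eL, contourTransform]
  ring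

theorem eL_eq_zero_of_lt (hlam : ∀ k, lam k ≠ 0) {x y : ℕ} (hR : ∀ k ≤ y, |lam k| < R)
    (hyx : y < x) (t : ℝ) : eL lam R t x y = 0 := by
  have hR0 := (pos_radius hR).le
  rw [eL_eq_contourTransform, contourTransform_congr hR0 fun w hw =>
      psiF_mul_pF_of_lt hlam hyx (ofReal_sub_ne_zero_of_mem_sphere hR hw),
    contourTransform_eq_zero_of_differentiable hR0 (by fun_prop), mul_zero]

theorem hasDerivAt_eL (hlam : ∀ k, lam k ≠ 0) {y : ℕ} (hR : ∀ k ≤ y, |lam k| < R) (x : ℕ)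
    (t : ℝ) : HasDerivAt (fun t => eL lam R t x y)
      (lam x * (eL lam R t (x + 1) y - eL lam R t x y)) t := by
  have hR0 := (pos_radius hR).le
  have hc := continuousOn_psiF_mul_pF hR
  simp only [eL_eq_contourTransform]
  refine ((hasDerivAt_contourTransform hR0 (hc x) t).const_mul _).congr_deriv ?_
  rw [← mul_sub, ← contourTransform_sub hR0 (hc (x + 1)) (hc x), mul_left_comm,
    ← contourTransform_const_mul (lam x : ℂ)]
  congr 2
  funext w
  linear_combination (-psiF lam y w) * mul_pF_succ_sub_pF (hlam x) w

theorem sum_eL_eq_contourTransform {y : ℕ} (hR : ∀ k ≤ y, |lam k| < R) (x : ℕ) (t : ℝ) :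
    ∑ z ∈ range (y + 1), eL lam R t x z = contourTransform R
      (fun w => (∑ z ∈ range (y + 1), (lam z : ℂ)⁻¹ * psiF lam z w) * pF lam x w) t := by
  simp only [Finset.sum_mul, mul_assoc]
  rw [contourTransform_sum (pos_radius hR).le]
  · simp only [eL_eq_contourTransform, contourTransform_const_mul]
  · exact fun z hz => continuousOn_const.mul (continuousOn_psiF_mul_pF
      (fun k hk => hR k (hk.trans (Finset.mem_range_succ_iff.1 hz))) x)

/- The two sides differ by the transform of the polynomial `p_x`, which vanishes. -/
theorem mul_sum_eL_sub_sum_eL_succ (hlam : ∀ k, lam k ≠ 0) {y : ℕ} (hR : ∀ k ≤ y, |lam k| < R)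
    (x : ℕ) (t : ℝ) :
    (lam x : ℂ) * (∑ z ∈ range (y + 1), eL lam R t x z -
      ∑ z ∈ range (y + 1), eL lam R t (x + 1) z) = lam y * eL lam R t x y := by
  have hR0 := (pos_radius hR).le
  have hp (x : ℕ) : ContinuousOn (pF lam x) (Metric.sphere 0 R) :=
    (differentiable_pF lam x).continuous.continuousOn
  have hc (x : ℕ) : ContinuousOn (fun w =>
      (∑ z ∈ range (y + 1), (lam z : ℂ)⁻¹ * psiF lam z w) * pF lam x w) (Metric.sphere 0 R) :=
    (continuousOn_finsetSum _ fun z hz => continuousOn_const.mul (continuousOn_psiF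
      fun k hk => hR k (hk.trans (Finset.mem_range_succ_iff.1 hz)))).mul (hp x)
  calc _ = contourTransform R (fun w => psiF lam y w * pF lam x w - pF lam x w) t := by
        rw [sum_eL_eq_contourTransform hR, sum_eL_eq_contourTransform hR,
          ← contourTransform_sub hR0 (hc x) (hc (x + 1)), ← contourTransform_const_mul]
        refine contourTransform_congr hR0 (fun w hw => ?_) t
        linear_combination
          (-∑ z ∈ range (y + 1), (lam z : ℂ)⁻¹ * psiF lam z w) * mul_pF_succ_sub_pF (hlam x) w -
          pF lam x w * neg_mul_sum_psiF hlam (ofReal_sub_ne_zero_of_mem_sphere hR hw)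
    _ = lam y * eL lam R t x y := by
        rw [contourTransform_sub hR0 (continuousOn_psiF_mul_pF hR x) (hp x),
          contourTransform_eq_zero_of_differentiable hR0 (differentiable_pF lam x), sub_zero,
          eL_eq_contourTransform, mul_inv_cancel_left₀ (ofReal_ne_zero.2 (hlam y))]

theorem tendsto_div_sub_cobounded {𝕜 : Type*} [NormedField 𝕜] (a : 𝕜) :
    Filter.Tendsto (fun w => a / (a - w)) (Bornology.cobounded 𝕜) (nhds 0) := by
  simp only [div_eq_mul_inv]
  simpa using (Filter.tendsto_inv₀_cobounded.comp
    (tendsto_const_sub_cobounded a)).const_mul a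

theorem tendsto_mul_div_sub_cobounded {𝕜 : Type*} [NormedField 𝕜] (a : 𝕜) :
    Filter.Tendsto (fun w => w * (a / (a - w))) (Bornology.cobounded 𝕜) (nhds (-a)) := by
  have h := ((tendsto_div_sub_cobounded a).sub_const 1).const_mul a
  rw [zero_sub, mul_neg_one] at h
  refine h.congr' ?_
  filter_upwards [Bornology.eventually_ne_cobounded a] with w hw
  have : a - w ≠ 0 := sub_ne_zero.2 (Ne.symm hw)
  field_simp
  ring

theorem circleIntegral_prod_div_sub_eq_zero {ι : Type*} {s : Finset ι} (hs : 1 < #s) {a : ι → ℂ}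
    (hR : ∀ k ∈ s, ‖a k‖ < R) : (∮ w in C(0, R), ∏ k ∈ s, a k / (a k - w)) = 0 := by
  classical
  obtain ⟨i, hi, j, hj, hij⟩ := Finset.one_lt_card.1 hs
  have hR0 : 0 < R := (norm_nonneg _).trans_lt (hR i hi)
  refine circleIntegral_eq_zero_of_tendsto_mul_cobounded hR0 (fun w hw => ?_) ?_
  · have (k) (hk : k ∈ s) : a k - w ≠ 0 := sub_ne_zero_of_norm_lt ((hR k hk).trans_le hw)
    exact .fun_finsetProd fun k hk => by fun_prop (disch := exact this k hk)
  · have hrest := tendsto_finsetProd (s.erase i) fun k _ => tendsto_div_sub_cobounded (a k)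
    have h := (tendsto_mul_div_sub_cobounded (a i)).mul hrest
    rw [Finset.prod_eq_zero (Finset.mem_erase.2 ⟨hij.symm, hj⟩) rfl, mul_zero] at h
    exact h.congr fun w => by
      rw [mul_assoc, Finset.mul_prod_erase s (fun k => a k / (a k - w)) hi]

theorem eL_zero (hlam : ∀ k, lam k ≠ 0) {y : ℕ} (hR : ∀ k ≤ y, |lam k| < R) (x : ℕ) :
    eL lam R 0 x y = if x = y then 1 else 0 := by
  rcases lt_or_ge y x with hyx | hxy
  · rw [eL_eq_zero_of_lt hlam hR hyx 0, if_neg hyx.ne']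
  rw [eL_eq_contourTransform, contourTransform_congr (pos_radius hR).le fun w hw =>
    psiF_mul_pF_of_le hlam hxy (ofReal_sub_ne_zero_of_mem_sphere hR hw), contourTransform]
  simp only [ofReal_zero, neg_zero, zero_mul, exp_zero, mul_one]
  rcases hxy.eq_or_lt with rfl | hlt
  · have hmem : (lam x : ℂ) ∈ Metric.ball (0 : ℂ) R := by
      rw [mem_ball_zero_iff, norm_real]
      exact hR x le_rfl
    have hpole (w : ℂ) : (lam x : ℂ) / (lam x - w) = -lam x * (w - lam x)⁻¹ := by
      rw [← neg_sub w, div_neg, div_eq_mul_inv, neg_mul]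
    simp only [Nat.Ico_succ_singleton, Finset.prod_singleton, hpole]
    rw [circleIntegral.integral_const_mul, circleIntegral.integral_sub_inv_of_mem_ball hmem,
      if_pos trivial]
    have := ofReal_ne_zero.2 (hlam x)
    have := two_pi_I_ne_zero
    field_simp
  · have hnorm : ∀ k ∈ Ico x (y + 1), ‖(lam k : ℂ)‖ < R := fun k hk =>
      (norm_real _).trans_lt (hR k (Nat.lt_succ_iff.1 (Finset.mem_Ico.1 hk).2))
    rw [circleIntegral_prod_div_sub_eq_zero (by rw [Nat.card_Ico]; omega) hnorm, if_neg hlt.ne,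
      mul_zero, mul_zero]

theorem sum_eL_zero (hlam : ∀ k, lam k ≠ 0) {y : ℕ} (hR : ∀ k ≤ y, |lam k| < R) (x : ℕ) :
    ∑ z ∈ range (y + 1), eL lam R 0 x z = if x ≤ y then 1 else 0 := by
  rw [Finset.sum_congr rfl fun z hz => eL_zero hlam (fun k hk =>
    hR k (hk.trans (Finset.mem_range_succ_iff.1 hz))) x]
  simp only [Finset.sum_ite_eq, Finset.mem_range_succ_iff]

end Kernel

section Determinant

variable {n : Type*} [Fintype n] [DecidableEq n]

theorem hasDerivAt_det {𝕜 𝔸 : Type*} [NontriviallyNormedField 𝕜] [NontriviallyNormedField 𝔸]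
    [NormedAlgebra 𝕜 𝔸] {A : 𝕜 → Matrix n n 𝔸} {A' : Matrix n n 𝔸} {t : 𝕜}
    (hA : ∀ i j, HasDerivAt (fun t => A t i j) (A' i j) t) :
    HasDerivAt (fun t => (A t).det) (∑ i, ((A t).updateRow i (A' i)).det) t := by
  let D : ContinuousMultilinearMap 𝔸 (fun _ : n => n → 𝔸) 𝔸 :=
    ⟨Matrix.detRowAlternating.toMultilinearMap, Continuous.matrix_det continuous_id⟩
  have hrows : HasDerivAt (fun t => (A t : n → n → 𝔸)) A' t :=
    hasDerivAt_pi.2 fun i => hasDerivAt_pi.2 fun j => hA i j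
  exact (((D.hasFDerivAt (A t)).restrictScalars 𝕜).comp_hasDerivAt t hrows).congr_deriv
    (D.linearDeriv_apply (A t) A')

theorem hasDerivAt_det_of_backward {𝕜 𝔸 α : Type*} [NontriviallyNormedField 𝕜]
    [NontriviallyNormedField 𝔸] [NormedAlgebra 𝕜 𝔸] {r : 𝕜 → n → α → n → 𝔸} {q q' : n → α}
    {c : n → 𝔸} {t : 𝕜}
    (hr : ∀ k l, HasDerivAt (fun t => r t k (q k) l) (c k * (r t k (q' k) l - r t k (q k) l)) t) :
    HasDerivAt (fun t => (Matrix.of fun k => r t k (q k)).det)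
      (∑ k, c k * ((Matrix.of fun i => r t i (Function.update q k (q' k) i)).det -
        (Matrix.of fun i => r t i (q i)).det)) t := by
  refine (hasDerivAt_det (A := fun t => Matrix.of fun k => r t k (q k))
    (A' := Matrix.of fun k => c k • (r t k (q' k) - r t k (q k))) hr).congr_deriv ?_
  refine Finset.sum_congr rfl fun k _ => ?_
  set A := Matrix.of fun i => r t i (q i)
  have hupdate : (Matrix.of fun i => r t i (Function.update q k (q' k) i)) =
      A.updateRow k (r t k (q' k)) :=
    funext fun i => Function.apply_update (r t) q k (q' k) i
  calc (A.updateRow k (c k • (r t k (q' k) - A k))).det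
      = c k * (A.updateRow k (r t k (q' k) - A k)).det := Matrix.det_updateRow_smul ..
    _ = c k * ((A.updateRow k (r t k (q' k))).det - (A.updateRow k (A k)).det) :=
        congrArg _ (Matrix.detRowAlternating.map_update_sub A k _ _)
    _ = _ := by rw [hupdate, Matrix.updateRow_eq_self]

/- A non-identity permutation moves some point `k` of maximal rank; then `σ k` and `σ⁻¹ k` have
smaller rank, so one of the entries `(k, σ⁻¹ k)` and `(σ k, k)` vanishes. -/
theorem det_eq_prod_diag_of_row_or_col {α S : Type*} [LinearOrder α] [CommRing S]
    {A : Matrix n n S} {rank : n → α} (hrank : Function.Injective rank)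
    (h : ∀ k, (∀ l, rank l < rank k → A k l = 0) ∨ ∀ l, rank l < rank k → A l k = 0) :
    A.det = ∏ k, A k k := by
  rw [Matrix.det_apply', Fintype.sum_eq_single 1 fun σ hσ => ?_]
  · simp
  obtain ⟨k, hk, hmax⟩ := Finset.exists_max_image σ.support rank
    (Finset.nonempty_iff_ne_empty.2 (mt Equiv.Perm.support_eq_empty_iff.1 hσ))
  have hlt (l) (hl : l ∈ σ.support) (hlk : l ≠ k) : rank l < rank k :=
    (hmax l hl).lt_of_ne (hrank.ne hlk)
  obtain ⟨i, hi⟩ : ∃ i, A (σ i) i = 0 := by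
    rcases h k with hrow | hcol
    · obtain ⟨l, rfl⟩ := σ.surjective k
      have hl := Equiv.Perm.apply_mem_support.1 hk
      exact ⟨l, hrow l (hlt l hl (Equiv.Perm.mem_support.1 hl).symm)⟩
    · exact ⟨k, hcol _ (hlt _ (Equiv.Perm.apply_mem_support.2 hk) (Equiv.Perm.mem_support.1 hk))⟩
  exact mul_eq_zero_of_right _ (Finset.prod_eq_zero (Finset.mem_univ i) hi)

end Determinant

section Duhamel

theorem complex_monotoneOn_of_hasDerivWithinAt_nonneg {D : Set ℝ} (hD : Convex ℝ D) {f f' : ℝ → ℂ}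
    (hf : ContinuousOn f D)
    (hf' : ∀ t ∈ interior D, HasDerivWithinAt f (f' t) (interior D) t)
    (hf'₀ : ∀ t ∈ interior D, 0 ≤ f' t) : MonotoneOn f D := by
  have him {t} (ht : t ∈ interior D) : (f' t).im = 0 := (nonneg_iff.1 (hf'₀ t ht)).2.symm
  have hre_mono : MonotoneOn (fun t => (f t).re) D :=
    monotoneOn_of_hasDerivWithinAt_nonneg hD (continuous_re.comp_continuousOn hf)
      (fun t ht => reCLM.hasFDerivAt.comp_hasDerivWithinAt t (hf' t ht))
      fun t ht => (nonneg_iff.1 (hf'₀ t ht)).1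
  have him_deriv (t) (ht : t ∈ interior D) :
      HasDerivWithinAt (fun t => (f t).im) (f' t).im (interior D) t :=
    imCLM.hasFDerivAt.comp_hasDerivWithinAt t (hf' t ht)
  have him_mono : MonotoneOn (fun t => (f t).im) D :=
    monotoneOn_of_hasDerivWithinAt_nonneg hD (continuous_im.comp_continuousOn hf) him_deriv
      fun t ht => (him ht).ge
  have him_anti : AntitoneOn (fun t => (f t).im) D :=
    antitoneOn_of_hasDerivWithinAt_nonpos hD (continuous_im.comp_continuousOn hf) him_deriv
      fun t ht => (him ht).le
  exact fun a ha b hb hab =>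
    ⟨hre_mono ha hb hab, (him_mono ha hb hab).antisymm (him_anti ha hb hab)⟩

theorem nonneg_of_hasDerivAt_sub_mul {f g : ℝ → ℂ} {r : ℝ}
    (hf : ∀ t, 0 ≤ t → HasDerivAt f (g t - r * f t) t) (hg : ∀ t, 0 ≤ t → 0 ≤ g t)
    (h0 : 0 ≤ f 0) {t : ℝ} (ht : 0 ≤ t) : 0 ≤ f t := by
  have hexp (t : ℝ) : 0 < (Real.exp (r * t) : ℂ) := zero_lt_real.2 (Real.exp_pos _)
  have hd (t) (ht : 0 ≤ t) :
      HasDerivAt (fun t => (Real.exp (r * t) : ℂ) * f t) (Real.exp (r * t) * g t) t := by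
    have hd_exp := ((hasDerivAt_id t).const_mul r).exp.ofReal_comp
    refine (hd_exp.mul (hf t ht)).congr_deriv ?_
    push_cast [id]
    ring
  have hmono : MonotoneOn (fun t => (Real.exp (r * t) : ℂ) * f t) (Set.Ici 0) :=
    complex_monotoneOn_of_hasDerivWithinAt_nonneg (convex_Ici 0)
      (fun t ht => (hd t ht).continuousAt.continuousWithinAt)
      (fun t ht => (hd t (interior_subset ht)).hasDerivWithinAt)
      fun t ht => mul_nonneg (hexp t).le (hg t (interior_subset ht))
  have hle := hmono Set.self_mem_Ici ht ht
  simp only [mul_zero, Real.exp_zero, ofReal_one, one_mul] at hle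
  exact le_of_mul_le_mul_left (by rw [mul_zero]; exact h0.trans hle) (hexp t)

theorem nonneg_of_hasDerivAt_sum_mul_sub {ι : Type*} [Fintype ι] {c : ι → ℝ} {f : ℝ → ℂ}
    {g : ι → ℝ → ℂ} (hc : ∀ k, 0 ≤ c k)
    (hf : ∀ t, 0 ≤ t → HasDerivAt f (∑ k, (c k : ℂ) * (g k t - f t)) t)
    (hg : ∀ k, (∀ t, 0 ≤ t → g k t = f t) ∨ ∀ t, 0 ≤ t → 0 ≤ g k t) (h0 : 0 ≤ f 0) {t : ℝ}
    (ht : 0 ≤ t) : 0 ≤ f t := by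
  classical
  let s : Finset ι := {k | ∀ t, 0 ≤ t → 0 ≤ g k t}
  refine nonneg_of_hasDerivAt_sub_mul (g := fun t => ∑ k ∈ s, (c k : ℂ) * g k t)
    (r := ∑ k ∈ s, c k) (fun t ht => (hf t ht).congr_deriv ?_) (fun t ht => ?_) h0 ht
  · have hdrop (k) (hk : k ∉ s) : (c k : ℂ) * (g k t - f t) = 0 := by
      have := (hg k).resolve_right (by simpa [s] using hk) t ht
      rw [this, sub_self, mul_zero]
    rw [← Finset.sum_subset (Finset.subset_univ s) fun k _ hk => hdrop k hk, ofReal_sum,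
      Finset.sum_mul, ← Finset.sum_sub_distrib]
    exact Finset.sum_congr rfl fun k _ => mul_sub _ _ _
  · exact Finset.sum_nonneg fun k hk =>
      mul_nonneg (zero_le_real.2 (hc k)) ((Finset.mem_filter.1 hk).2 t ht)

end Duhamel

namespace Interlace

variable {N : ℕ} {y : Fin N → ℕ} {x : Fin (N + 1) → ℕ}

theorem strictMono_upper (h : Interlace y x) : StrictMono x :=
  Fin.strictMono_iff_lt_succ.2 fun i => (h i).1.trans_lt (h i).2

theorem upper_le_lower (h : Interlace y x) {i : Fin (N + 1)} {j : Fin N} (hij : (i : ℕ) ≤ j) :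
    x i ≤ y j :=
  (h.strictMono_upper.monotone (show i ≤ j.castSucc from hij)).trans (h j).1

theorem lower_lt_upper (h : Interlace y x) {i : Fin (N + 1)} {j : Fin N} (hij : (j : ℕ) < i) :
    y j < x i :=
  (h j).2.trans_le (h.strictMono_upper.monotone (show j.succ ≤ i from hij))

theorem strictMono_lower (h : Interlace y x) : StrictMono y := fun _ j hij =>
  (h.lower_lt_upper (i := j.castSucc) hij).trans_le (h j).1

theorem elim_le_last (h : Interlace y x) : ∀ k, Sum.elim x y k ≤ x (Fin.last N)
  | .inl i => h.strictMono_upper.monotone i.le_last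
  | .inr i => (h.lower_lt_upper (i := Fin.last N) i.2).le

theorem sum_add_sum_le (h : Interlace y x) :
    ∑ i, x i + ∑ i, y i ≤ (2 * N + 1) * x (Fin.last N) := by
  have hsum := Finset.sum_le_card_nsmul univ (Sum.elim x y) _ fun k _ => h.elim_le_last k
  rw [Fintype.sum_sum_type] at hsum
  refine hsum.trans_eq ?_
  simp only [Finset.card_univ, Fintype.card_sum, Fintype.card_fin, smul_eq_mul]
  ring

theorem update_upper (h : Interlace y x) {i : Fin (N + 1)} (hfree : ∀ j, x i ≠ y j) :
    Interlace y (Function.update x i (x i + 1)) := fun j => by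
  have := h j
  have := hfree j
  constructor <;> rw [Function.update_apply] <;> split_ifs <;> subst_vars <;> omega

theorem update_lower (h : Interlace y x) {i : Fin N} (hfree : y i + 1 ≠ x i.succ) :
    Interlace (Function.update y i (y i + 1)) x := fun j => by
  have := h j
  simp only [Function.update_apply]
  split_ifs <;> subst_vars <;> omega

theorem update_lower_update_upper (h : Interlace y x) {i : Fin N} (hpush : y i + 1 = x i.succ)
    (hfree : ∀ j, y i + 1 ≠ y j) :
    Interlace (Function.update y i (y i + 1)) (Function.update x i.succ (x i.succ + 1)) :=
  fun j => by
  have hij := h j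
  have hyj := hfree j
  rcases eq_or_ne j i with rfl | hne
  · rw [Function.update_self, Function.update_self,
      Function.update_of_ne Fin.castSucc_lt_succ.ne]
    omega
  · rw [Function.update_of_ne hne, Function.update_of_ne (Fin.succ_injective _ |>.ne hne)]
    refine ⟨?_, hij.2⟩
    rw [Function.update_apply]
    split_ifs with heq
    · rw [heq] at hij
      omega
    · exact hij.1

end Interlace

/-- Row `k` of the matrix defining `Ut` when the particle indexed by `k` starts at `a`; the indices
`inl` and `inr` stand for the upper particles `x` and the lower particles `y`. -/
noncomputable def blockRow (lam : ℕ → ℝ) (R : ℝ) {N : ℕ} (y' : Fin N → ℕ) (x' : Fin (N + 1) → ℕ)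
    (t : ℝ) : Fin (N + 1) ⊕ Fin N → ℕ → Fin (N + 1) ⊕ Fin N → ℂ
  | .inl _, a, .inl j => eL lam R t a (x' j)
  | .inl i, a, .inr j => (1 / (lam (y' j) : ℂ)) *
      ((∑ z ∈ range (y' j + 1), eL lam R t a z) - if (i : ℕ) ≤ (j : ℕ) then 1 else 0)
  | .inr _, a, .inl j => (lam a : ℂ) * (eL lam R t a (x' j) - eL lam R t (a + 1) (x' j))
  | .inr _, a, .inr j => eL lam R t a (y' j)

section BlockDeterminant

variable {lam : ℕ → ℝ} {R : ℝ} {N : ℕ} {y' : Fin N → ℕ} {x' : Fin (N + 1) → ℕ}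

theorem Ut_eq_det_blockRow (lam : ℕ → ℝ) (R t : ℝ) (y : Fin N → ℕ) (x : Fin (N + 1) → ℕ)
    (y' : Fin N → ℕ) (x' : Fin (N + 1) → ℕ) :
    Ut lam R t N y x y' x' =
      (Matrix.of fun k => blockRow lam R y' x' t k (Sum.elim x y k)).det := by
  rw [Ut]
  congr 1
  ext (i | i) (j | j) <;> rfl

theorem hasDerivAt_blockRow (hlam : ∀ k, lam k ≠ 0)
    (hR : ∀ l, ∀ k ≤ Sum.elim x' y' l, |lam k| < R) (k : Fin (N + 1) ⊕ Fin N) (a : ℕ)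
    (l : Fin (N + 1) ⊕ Fin N) (t : ℝ) :
    HasDerivAt (fun t => blockRow lam R y' x' t k a l)
      (lam a * (blockRow lam R y' x' t k (a + 1) l - blockRow lam R y' x' t k a l)) t := by
  have he (a) := hasDerivAt_eL hlam (hR l) a t
  rcases k with i | i <;> rcases l with j | j
  · exact he a
  · have hz (z) (hz : z ∈ range (y' j + 1)) := hasDerivAt_eL hlam
      (fun k hk => hR (.inr j) k (hk.trans (Finset.mem_range_succ_iff.1 hz))) a t
    refine (((HasDerivAt.fun_sum hz).sub_const _).const_mul _).congr_deriv ?_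
    simp only [blockRow, ← Finset.mul_sum, Finset.sum_sub_distrib]
    ring
  · refine (((he a).sub (he (a + 1))).const_mul _).congr_deriv ?_
    simp only [blockRow, Sum.elim_inl]
    ring
  · exact he a

theorem blockRow_inr_eq (hlam : ∀ k, lam k ≠ 0)
    (hR : ∀ l, ∀ k ≤ Sum.elim x' y' l, |lam k| < R) (i : Fin N) (j : Fin (N + 1)) (a : ℕ) (t : ℝ) :
    blockRow lam R y' x' t (.inr i) a = (lam a : ℂ) •
      (blockRow lam R y' x' t (.inl j) a - blockRow lam R y' x' t (.inl j) (a + 1)) := by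
  funext l
  rcases l with l | l
  · rfl
  · have hforward := mul_sum_eL_sub_sum_eL_succ hlam (hR (.inr l)) a t
    have := ofReal_ne_zero.2 (hlam (y' l))
    simp only [blockRow, Pi.smul_apply, Pi.sub_apply, smul_eq_mul]
    rw [← mul_sub, sub_sub_sub_cancel_right, mul_left_comm]
    simp only [Sum.elim_inr] at hforward
    rw [hforward]
    field_simp

theorem hasDerivAt_Ut (hlam : ∀ k, lam k ≠ 0) (hR : ∀ l, ∀ k ≤ Sum.elim x' y' l, |lam k| < R)
    (y : Fin N → ℕ) (x : Fin (N + 1) → ℕ) (t : ℝ) :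
    HasDerivAt (fun t => Ut lam R t N y x y' x')
      (∑ i, (lam (x i) : ℂ) *
          (Ut lam R t N y (Function.update x i (x i + 1)) y' x' - Ut lam R t N y x y' x') +
        ∑ i, (lam (y i) : ℂ) *
          (Ut lam R t N (Function.update y i (y i + 1)) x y' x' - Ut lam R t N y x y' x')) t := by
  simp only [Ut_eq_det_blockRow]
  refine (hasDerivAt_det_of_backward (q := Sum.elim x y) (q' := fun k => Sum.elim x y k + 1)
    fun k l => hasDerivAt_blockRow hlam hR k _ l t).congr_deriv ?_
  simp only [Fintype.sum_sum_type, Sum.elim_inl, Sum.elim_inr, Sum.update_elim_inl,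
    Sum.update_elim_inr]

/- The row of a lower particle at `a` is `λ(a)` times the difference of the rows of an upper
particle at `a` and at `a + 1`. The invariance encodes both the blocking and the pushing. -/
theorem Ut_update_upper_of_eq (hlam : ∀ k, lam k ≠ 0)
    (hR : ∀ l, ∀ k ≤ Sum.elim x' y' l, |lam k| < R) {y : Fin N → ℕ} {x : Fin (N + 1) → ℕ}
    {i : Fin (N + 1)} {j : Fin N} (hij : x i = y j) (t : ℝ) :
    Ut lam R t N y (Function.update x i (x i + 1)) y' x' = Ut lam R t N y x y' x' := by
  simp only [Ut_eq_det_blockRow]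
  set A := Matrix.of fun k => blockRow lam R y' x' t k (Sum.elim x y k)
  have hl := ofReal_ne_zero.2 (hlam (y j))
  have hrow : blockRow lam R y' x' t (.inl i) (x i + 1) =
      A (.inl i) + (-(lam (y j) : ℂ)⁻¹) • A (.inr j) := by
    change _ = blockRow lam R y' x' t (.inl i) (x i) +
      (-(lam (y j) : ℂ)⁻¹) • blockRow lam R y' x' t (.inr j) (y j)
    rw [blockRow_inr_eq hlam hR j i, smul_smul, neg_mul, inv_mul_cancel₀ hl, hij, neg_one_smul]
    abel
  have hupdate : (Matrix.of fun k => blockRow lam R y' x' t k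
      (Sum.elim (Function.update x i (x i + 1)) y k)) =
      A.updateRow (.inl i) (blockRow lam R y' x' t (.inl i) (x i + 1)) := by
    rw [← Sum.update_elim_inl]
    exact funext fun k => Function.apply_update (blockRow lam R y' x' t) (Sum.elim x y) _ _ k
  rw [hupdate, hrow, Matrix.det_updateRow_add_smul_self A Sum.inl_ne_inr]

theorem Ut_eq_zero_of_lower_eq (lam : ℕ → ℝ) (R t : ℝ) {y : Fin N → ℕ} (x : Fin (N + 1) → ℕ)
    (y' : Fin N → ℕ) (x' : Fin (N + 1) → ℕ) {i j : Fin N} (hij : i ≠ j) (h : y i = y j) :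
    Ut lam R t N y x y' x' = 0 := by
  rw [Ut_eq_det_blockRow]
  refine Matrix.det_zero_of_row_eq (Sum.inr_injective.ne hij) (funext fun l => ?_)
  simp only [Matrix.of_apply, Sum.elim_inr, h]
  rcases l with l | l <;> rfl

theorem Ut_eq_zero_of_last_lt (hlam : ∀ k, lam k ≠ 0)
    (hR : ∀ l, ∀ k ≤ Sum.elim x' y' l, |lam k| < R) (y : Fin N → ℕ) {x : Fin (N + 1) → ℕ}
    (hx : ∀ l, Sum.elim x' y' l < x (Fin.last N)) (t : ℝ) : Ut lam R t N y x y' x' = 0 := by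
  rw [Ut_eq_det_blockRow]
  refine Matrix.det_eq_zero_of_row_eq_zero (.inl (Fin.last N)) fun l => ?_
  rcases l with l | l
  · exact eL_eq_zero_of_lt hlam (hR (.inl l)) (hx (.inl l)) t
  · have hsum : ∑ z ∈ range (y' l + 1), eL lam R t (x (Fin.last N)) z = 0 :=
      Finset.sum_eq_zero fun z hz => by
        have hzy := Finset.mem_range_succ_iff.1 hz
        exact eL_eq_zero_of_lt hlam (fun k hk => hR (.inr l) k (hk.trans hzy))
          (hzy.trans_lt (hx (.inr l))) t
    simp only [Matrix.of_apply, Sum.elim_inl, blockRow, hsum, Fin.val_last, l.2.not_ge, if_false,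
      sub_zero, mul_zero]

end BlockDeterminant

section TimeZero

variable {lam : ℕ → ℝ} {R : ℝ} {N : ℕ} {y y' : Fin N → ℕ} {x x' : Fin (N + 1) → ℕ}

theorem blockRow_zero_inl_inl (hlam : ∀ k, lam k ≠ 0)
    (hR : ∀ l, ∀ k ≤ Sum.elim x' y' l, |lam k| < R) (i j : Fin (N + 1)) (a : ℕ) :
    blockRow lam R y' x' 0 (.inl i) a (.inl j) = if a = x' j then 1 else 0 :=
  eL_zero hlam (hR (.inl j)) a

theorem blockRow_zero_inl_inr (hlam : ∀ k, lam k ≠ 0)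
    (hR : ∀ l, ∀ k ≤ Sum.elim x' y' l, |lam k| < R) (i : Fin (N + 1)) (j : Fin N) (a : ℕ) :
    blockRow lam R y' x' 0 (.inl i) a (.inr j) = 1 / lam (y' j) *
      ((if a ≤ y' j then 1 else 0) - if (i : ℕ) ≤ (j : ℕ) then 1 else 0) := by
  rw [blockRow, sum_eL_zero (y := y' j) hlam (hR (.inr j))]

theorem blockRow_zero_inr_inl (hlam : ∀ k, lam k ≠ 0)
    (hR : ∀ l, ∀ k ≤ Sum.elim x' y' l, |lam k| < R) (i : Fin N) (j : Fin (N + 1)) (a : ℕ) :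
    blockRow lam R y' x' 0 (.inr i) a (.inl j) =
      lam a * ((if a = x' j then 1 else 0) - if a + 1 = x' j then 1 else 0) := by
  have heL := eL_zero (y := x' j) hlam (hR (.inl j))
  rw [blockRow, heL, heL]

theorem blockRow_zero_inr_inr (hlam : ∀ k, lam k ≠ 0)
    (hR : ∀ l, ∀ k ≤ Sum.elim x' y' l, |lam k| < R) (i j : Fin N) (a : ℕ) :
    blockRow lam R y' x' 0 (.inr i) a (.inr j) = if a = y' j then 1 else 0 :=
  eL_zero hlam (hR (.inr j)) a

/-- The rank of a particle in the interlacing order `x₁, y₁, x₂, y₂, …, x_{N+1}`. -/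
def interlaceRank {N : ℕ} : Fin (N + 1) ⊕ Fin N → ℕ :=
  Sum.elim (fun i => 2 * i) fun i => 2 * i + 1

theorem interlaceRank_injective : Function.Injective (interlaceRank (N := N)) := by
  rintro (i | i) (j | j) h <;> simp only [interlaceRank, Sum.elim_inl, Sum.elim_inr] at h
  · exact congrArg _ (Fin.ext (by omega))
  · omega
  · omega
  · exact congrArg _ (Fin.ext (by omega))

theorem blockRow_zero_inl_row_or_col (hlam : ∀ k, lam k ≠ 0)
    (hR : ∀ l, ∀ k ≤ Sum.elim x' y' l, |lam k| < R) (hyx : Interlace y x)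
    (hyx' : Interlace y' x') (i : Fin (N + 1)) :
    (∀ l, interlaceRank l < interlaceRank (.inl i) →
      blockRow lam R y' x' 0 (.inl i) (x i) l = 0) ∨
    ∀ l, interlaceRank l < interlaceRank (.inl i) →
      blockRow lam R y' x' 0 l (Sum.elim x y l) (.inl i) = 0 := by
  rcases le_or_gt (x' i) (x i) with hi | hi
  · left
    rintro (j | j) hj <;> simp only [interlaceRank, Sum.elim_inl, Sum.elim_inr] at hj
    · have := hyx'.strictMono_upper (show j < i by omega)
      rw [blockRow_zero_inl_inl hlam hR, if_neg (by omega)]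
    · have := hyx'.lower_lt_upper (show (j : ℕ) < i by omega)
      rw [blockRow_zero_inl_inr hlam hR, if_neg (by omega), if_neg (by omega), sub_self, mul_zero]
  · right
    rintro (j | j) hj <;> simp only [interlaceRank, Sum.elim_inl, Sum.elim_inr] at hj ⊢
    · have := hyx.strictMono_upper (show j < i by omega)
      rw [blockRow_zero_inl_inl hlam hR, if_neg (by omega)]
    · have := hyx.lower_lt_upper (show (j : ℕ) < i by omega)
      rw [blockRow_zero_inr_inl hlam hR, if_neg (by omega), if_neg (by omega), sub_self, mul_zero]

theorem blockRow_zero_inr_row_or_col (hlam : ∀ k, lam k ≠ 0)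
    (hR : ∀ l, ∀ k ≤ Sum.elim x' y' l, |lam k| < R) (hyx : Interlace y x)
    (hyx' : Interlace y' x') (i : Fin N) :
    (∀ l, interlaceRank l < interlaceRank (.inr i) →
      blockRow lam R y' x' 0 (.inr i) (y i) l = 0) ∨
    ∀ l, interlaceRank l < interlaceRank (.inr i) →
      blockRow lam R y' x' 0 l (Sum.elim x y l) (.inr i) = 0 := by
  rcases lt_or_ge (y' i) (y i) with hi | hi
  · left
    rintro (j | j) hj <;> simp only [interlaceRank, Sum.elim_inl, Sum.elim_inr] at hj
    · have := hyx'.upper_le_lower (show (j : ℕ) ≤ i by omega)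
      rw [blockRow_zero_inr_inl hlam hR, if_neg (by omega), if_neg (by omega), sub_self, mul_zero]
    · have := hyx'.strictMono_lower (show j < i by omega)
      rw [blockRow_zero_inr_inr hlam hR, if_neg (by omega)]
  · right
    rintro (j | j) hj <;> simp only [interlaceRank, Sum.elim_inl, Sum.elim_inr] at hj ⊢
    · have := hyx.upper_le_lower (show (j : ℕ) ≤ i by omega)
      rw [blockRow_zero_inl_inr hlam hR, if_pos (by omega), if_pos (by omega), sub_self, mul_zero]
    · have := hyx.strictMono_lower (show j < i by omega)
      rw [blockRow_zero_inr_inr hlam hR, if_neg (by omega)]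

theorem Ut_zero (hlam : ∀ k, lam k ≠ 0) (hR : ∀ l, ∀ k ≤ Sum.elim x' y' l, |lam k| < R)
    (hyx : Interlace y x) (hyx' : Interlace y' x') :
    Ut lam R 0 N y x y' x' = if y = y' ∧ x = x' then 1 else 0 := by
  rw [Ut_eq_det_blockRow, det_eq_prod_diag_of_row_or_col interlaceRank_injective
    (Sum.rec (blockRow_zero_inl_row_or_col hlam hR hyx hyx')
      (blockRow_zero_inr_row_or_col hlam hR hyx hyx')), Fintype.prod_sum_type]
  simp only [Matrix.of_apply, Sum.elim_inl, Sum.elim_inr, blockRow_zero_inl_inl hlam hR,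
    blockRow_zero_inr_inr hlam hR, Fintype.prod_ite_zero, Finset.prod_const_one, funext_iff]
  split_ifs <;> simp_all

end TimeZero

section Nonneg

theorem sum_update_add {ι M : Type*} [Fintype ι] [DecidableEq ι] [AddCommMonoid M] (f : ι → M)
    (i : ι) (a : M) : ∑ j, Function.update f i (f i + a) j = ∑ j, f j + a := by
  rw [Finset.sum_update_of_mem (Finset.mem_univ i), add_right_comm,
    ← Finset.sum_eq_add_sum_sdiff_singleton_of_mem (Finset.mem_univ i)]

variable {lam : ℕ → ℝ} {R : ℝ} {N : ℕ} {y y' : Fin N → ℕ} {x x' : Fin (N + 1) → ℕ}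

theorem Ut_update_upper_eq_or_interlace (hlam : ∀ k, lam k ≠ 0)
    (hR : ∀ l, ∀ k ≤ Sum.elim x' y' l, |lam k| < R) (hyx : Interlace y x) (i : Fin (N + 1)) :
    (∀ t, Ut lam R t N y (Function.update x i (x i + 1)) y' x' = Ut lam R t N y x y' x') ∨
      Interlace y (Function.update x i (x i + 1)) := by
  by_cases hij : ∃ j, x i = y j
  · exact .inl fun t => Ut_update_upper_of_eq hlam hR hij.choose_spec t
  · exact .inr (hyx.update_upper (not_exists.1 hij))

theorem Ut_update_lower_nonneg (hlam : ∀ k, lam k ≠ 0)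
    (hR : ∀ l, ∀ k ≤ Sum.elim x' y' l, |lam k| < R) (hyx : Interlace y x) {t : ℝ}
    (hnonneg : ∀ y₁ x₁, Interlace y₁ x₁ → ∑ i, x i + ∑ i, y i < ∑ i, x₁ i + ∑ i, y₁ i →
      0 ≤ Ut lam R t N y₁ x₁ y' x') (i : Fin N) :
    0 ≤ Ut lam R t N (Function.update y i (y i + 1)) x y' x' := by
  by_cases hpush : y i + 1 = x i.succ
  · by_cases hfree : ∀ j, y i + 1 ≠ y j
    · rw [← Ut_update_upper_of_eq (j := i) hlam hR (by rw [Function.update_self, hpush])]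
      refine hnonneg _ _ (hyx.update_lower_update_upper hpush hfree) ?_
      rw [sum_update_add, sum_update_add]
      omega
    · obtain ⟨j, hj⟩ := not_forall_not.1 hfree
      have hij : j ≠ i := by rintro rfl; omega
      refine (Ut_eq_zero_of_lower_eq lam R t x y' x' hij ?_).ge
      rw [Function.update_self, Function.update_of_ne hij, hj]
  · refine hnonneg _ _ (hyx.update_lower hpush) ?_
    rw [sum_update_add]
    omega

theorem Ut_nonneg_of_later (hpos : ∀ k, 0 < lam k)
    (hR : ∀ l, ∀ k ≤ Sum.elim x' y' l, |lam k| < R) (hyx : Interlace y x) (hyx' : Interlace y' x')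
    (hlater : ∀ t, 0 ≤ t → ∀ y₁ x₁, Interlace y₁ x₁ →
      ∑ i, x i + ∑ i, y i < ∑ i, x₁ i + ∑ i, y₁ i → 0 ≤ Ut lam R t N y₁ x₁ y' x')
    {t : ℝ} (ht : 0 ≤ t) : 0 ≤ Ut lam R t N y x y' x' := by
  have hlam (k) : lam k ≠ 0 := (hpos k).ne'
  refine nonneg_of_hasDerivAt_sum_mul_sub (f := fun t => Ut lam R t N y x y' x')
    (c := fun k => lam (Sum.elim x y k))
    (g := fun k t => Sum.elim (fun i => Ut lam R t N y (Function.update x i (x i + 1)) y' x')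
      (fun i => Ut lam R t N (Function.update y i (y i + 1)) x y' x') k)
    (fun k => (hpos _).le) (fun t _ => (hasDerivAt_Ut hlam hR y x t).congr_deriv ?_) ?_ ?_ ht
  · rw [Fintype.sum_sum_type]
    rfl
  · rintro (i | i)
    · refine (Ut_update_upper_eq_or_interlace hlam hR hyx i).imp (fun h t _ => h t)
        fun h t ht => hlater t ht _ _ h ?_
      rw [sum_update_add]
      omega
    · exact .inr fun t ht => Ut_update_lower_nonneg hlam hR hyx (hlater t ht) i
  · simp only [Ut_zero hlam hR hyx hyx']
    split_ifs
    exacts [zero_le_one, le_rfl]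

end Nonneg

theorem stmt_3_general {lam : ℕ → ℝ} (hpos : ∀ k, 0 < lam k) {R : ℝ} {N : ℕ} {t : ℝ} (ht : 0 ≤ t)
    {y : Fin N → ℕ} {x : Fin (N + 1) → ℕ} (hyx : Interlace y x)
    {y' : Fin N → ℕ} {x' : Fin (N + 1) → ℕ} (hyx' : Interlace y' x')
    (hR : ∀ k ≤ x' (Fin.last N), lam k < R) : 0 ≤ Ut lam R t N y x y' x' := by
  have habs (l) (k) (hk : k ≤ Sum.elim x' y' l) : |lam k| < R :=
    (abs_of_pos (hpos k)).trans_lt (hR k (hk.trans (hyx'.elim_le_last l)))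
  induction hn : (2 * N + 1) * (x' (Fin.last N) + 1) - (∑ i, x i + ∑ i, y i)
    using Nat.strong_induction_on generalizing y x t with
  | _ n ih =>
  rcases lt_or_ge (x' (Fin.last N)) (x (Fin.last N)) with hlast | hlast
  · exact (Ut_eq_zero_of_last_lt (fun k => (hpos k).ne') habs y
      (fun l => (hyx'.elim_le_last l).trans_lt hlast) t).ge
  · have hsum : ∑ i, x i + ∑ i, y i < (2 * N + 1) * (x' (Fin.last N) + 1) :=
      hyx.sum_add_sum_le.trans_lt (Nat.mul_lt_mul_of_pos_left (Nat.lt_succ_of_le hlast)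
        (Nat.succ_pos _))
    exact Ut_nonneg_of_later hpos habs hyx hyx'
      (fun t ht y₁ x₁ h₁ hlt => ih _ (by omega) ht h₁ rfl) ht

/-- for all t ≥ 0 and (y,x),(y',x') ∈ W^{N,N+1},
U_t^{N,N+1}[(y,x),(y',x')] ≥ 0 (in the complex order, i.e. it is real and nonnegative). -/
theorem stmt_3 (lam : ℕ → ℝ) (s M : ℝ) (hs : 0 < s)
    (hlb : ∀ x, s ≤ lam x) (hub : ∀ x, lam x ≤ M)
    (R : ℝ) (hR : M < R) (N : ℕ) (hN : 1 ≤ N) (t : ℝ) (ht : 0 ≤ t)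
    (y : Fin N → ℕ) (x : Fin (N + 1) → ℕ) (hyx : Interlace y x)
    (y' : Fin N → ℕ) (x' : Fin (N + 1) → ℕ) (hy'x' : Interlace y' x') :
    0 ≤ Ut lam R t N y x y' x' :=
  stmt_3_general (fun k => hs.trans_le (hlb k)) ht hyx hy'x'
    fun k _ => (hub k).trans_lt hR
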